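/- There exist universal constants C₁, C₂ > 0 such that for every n ≥ 1, all unit vectors u, v ∈ ℝⁿ and every ε ∈ (0,1), if G is a GOTE(4,n) tensor then |E[λ₁(n^{−1/2} G·u⊗v)] − E[λ₁(n^{−1/2} G·u⊗u)]| ≤ C₁·ε + C₂·√(‖u − v‖₂ · log(1/ε)). -/

import Mathlib

open MeasureTheory ProbabilityTheory Filter

noncomputable section

/-- The size-`r` multiset of entries of a tuple `a : Fin r → Fin n`. -/
def tupleSym {n r : ℕ} (a : Fin r → Fin n) : Sym (Fin n) r :=
  ⟨(List.ofFn a : Multiset (Fin n)), by simp⟩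

/-- `#Perm(a)`: the number of tuples with the same multiset of entries as `a`. -/
def permCount {n r : ℕ} (a : Fin r → Fin n) : ℕ :=
  (Finset.univ.filter (fun b : Fin r → Fin n => tupleSym b = tupleSym a)).card

/-- The sample space for a GOTE(r,n) tensor: one standard Gaussian coordinate for each
size-`r` multiset of indices. -/
abbrev GoteSpace (r n : ℕ) : Type := Sym (Fin n) r → ℝ

/-- The law of the coordinates of a GOTE(r,n) tensor: a product of standard Gaussians. -/
def goteMeasure (r n : ℕ) : Measure (GoteSpace r n) :=
  Measure.pi fun _ => gaussianReal 0 1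

instance (r n : ℕ) : IsProbabilityMeasure (goteMeasure r n) := by
  unfold goteMeasure; infer_instance

/-- The entries of the GOTE(r,n) tensor built from the Gaussian coordinates `ω`. -/
def gote {r n : ℕ} (ω : GoteSpace r n) (a : Fin r → Fin n) : ℝ :=
  Real.sqrt ((r : ℝ) / (permCount a : ℝ)) * ω (tupleSym a)

/-- The index tuple `(i, j, f 0, …, f (r-3))`. -/
def glue {n r : ℕ} (i j : Fin n) (f : Fin (r - 2) → Fin n) : Fin r → Fin n :=
  fun t =>
    if h0 : (t : ℕ) = 0 then i
    else if h1 : (t : ℕ) = 1 then j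
    else f ⟨(t : ℕ) - 2, by have := t.isLt; omega⟩

/-- The pure contraction `G ⬝ w^{⊗(r-2)}`, an `n × n` random symmetric matrix. -/
def pureContraction {r n : ℕ} (ω : GoteSpace r n) (w : Fin n → ℝ) :
    Matrix (Fin n) (Fin n) ℝ :=
  fun i j => ∑ f : Fin (r - 2) → Fin n, gote ω (glue i j f) * ∏ k, w (f k)

open Classical in
/-- The eigenvalues (in some order) of a matrix, defined for symmetric matrices via the
spectral theorem and as `0` otherwise. -/
def eigsOf {n : ℕ} (A : Matrix (Fin n) (Fin n) ℝ) : Fin n → ℝ :=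
  if h : A.IsHermitian then h.eigenvalues else 0

/-- The largest eigenvalue `λ₁` of a symmetric matrix. -/
def lambdaMax {n : ℕ} (A : Matrix (Fin n) (Fin n) ℝ) : ℝ := ⨆ i, eigsOf A i

/-- The smallest eigenvalue `λₙ` of a symmetric matrix. -/
def lambdaMin {n : ℕ} (A : Matrix (Fin n) (Fin n) ℝ) : ℝ := ⨅ i, eigsOf A i

/-- The semicircle distribution with variance `σ²` (parameter `s = σ²`). -/
def semicircle (s : ℝ) : Measure ℝ :=
  volume.withDensity fun x => ENNReal.ofReal (Real.sqrt (4 * s - x ^ 2) / (2 * Real.pi * s))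

end

/-- The mixed contraction `G·u⊗v` of a GOTE(4,n) tensor: the `n × n` random symmetric
matrix with entries `(G·u⊗v)_{ij} = Σ_{a,b} G_{i,j,a,b} u_a v_b`. -/
noncomputable def mixedContraction {n : ℕ} (ω : GoteSpace 4 n) (u v : Fin n → ℝ) :
    Matrix (Fin n) (Fin n) ℝ :=
  fun i j => ∑ a : Fin n, ∑ b : Fin n, gote ω ![i, j, a, b] * u a * v b

/-!
The comparison is a consequence of a Lipschitz bound. By Weyl's inequality `λ₁` is `1`-Lipschitz in
the operator norm, and `G·u⊗v - G·u⊗w = G·u⊗(v - w)`, so it suffices to show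
`E‖G·u⊗w‖ ≤ C √n ‖u‖ ‖w‖`. Each form `⟨x, (G·u⊗w) y⟩` pairs `G` with `x ⊗ y ⊗ u ⊗ w`, hence is a
linear form in the Gaussian coordinates, and by Cauchy–Schwarz on permutation classes its variance
is at most `4 ‖x‖² ‖y‖² ‖u‖² ‖w‖²`. The operator norm is at most four times the maximum of these
forms over a pair of `1/2`-nets of at most `5ⁿ` points, and the maximum of `N` sub-Gaussian
variables of variance proxy `c` has mean at most `√(2 c log N)`.
-/

section Nets

open Metric Module
open scoped NNReal

variable {E F : Type*}

theorem packingNumber_half_unitBall_le [NormedAddCommGroup E] [NormedSpace ℝ E]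
    [FiniteDimensional ℝ E] :
    packingNumber (1 / 2) (closedBall (0 : E) 1) ≤ 5 ^ finrank ℝ E := by
  classical
  refine iSup₂_le fun C hC => iSup_le fun hsep => ?_
  by_contra! hcard
  obtain ⟨D, hDC, hD⟩ := Set.exists_subset_encard_eq (Order.add_one_le_of_lt hcard)
  have hDfin : D.Finite :=
    Set.finite_of_encard_eq_coe (k := 5 ^ finrank ℝ E + 1) (by simpa using hD)
  lift D to Finset E using hDfin
  have hinj : Function.Injective fun x : E => (2 : ℝ) • x := smul_right_injective E two_ne_zero
  have hle : (D.image fun x => (2 : ℝ) • x).card ≤ 5 ^ finrank ℝ E := by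
    refine Besicovitch.card_le_of_separated _ ?_ ?_
    · simp only [Finset.forall_mem_image, norm_smul, Real.norm_ofNat]
      intro x hx
      have := mem_closedBall_zero_iff.1 (hC (hDC hx))
      linarith
    · simp only [Finset.forall_mem_image, ← smul_sub, norm_smul, Real.norm_ofNat]
      intro x hx y hy hxy
      have hdist : 1 / 2 < dist x y := by
        have hlt : ((1 / 2 : ℝ≥0) : ENNReal) < edist x y :=
          hsep (hDC hx) (hDC hy) (ne_of_apply_ne _ hxy)
        rw [edist_nndist, ENNReal.coe_lt_coe] at hlt
        exact_mod_cast hlt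
      rw [dist_eq_norm] at hdist
      linarith
  rw [Finset.card_image_of_injective _ hinj] at hle
  rw [Set.encard_coe_eq_coe_finsetCard] at hD
  norm_cast at hD
  omega

theorem exists_finset_isCover_half_unitBall [NormedAddCommGroup E] [NormedSpace ℝ E]
    [FiniteDimensional ℝ E] :
    ∃ N : Finset E, (N : Set E) ⊆ closedBall 0 1 ∧
      IsCover (1 / 2) (closedBall (0 : E) 1) (N : Set E) ∧ N.card ≤ 5 ^ finrank ℝ E := by
  have hle : coveringNumber (1 / 2) (closedBall (0 : E) 1) ≤ 5 ^ finrank ℝ E :=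
    (coveringNumber_le_packingNumber _ _).trans packingNumber_half_unitBall_le
  have hne_top : coveringNumber (1 / 2) (closedBall (0 : E) 1) ≠ ⊤ :=
    ne_top_of_le_ne_top (ENat.natCast_ne_top (5 ^ finrank ℝ E)) (mod_cast hle)
  obtain ⟨N, hN, hfin, hcover, hcard⟩ := exists_set_encard_eq_coveringNumber hne_top
  lift N to Finset E using hfin
  rw [← hcard, Set.encard_coe_eq_coe_finsetCard] at hle
  exact ⟨N, hN, hcover, mod_cast hle⟩

theorem exists_mem_norm_sub_le_of_isCover [SeminormedAddCommGroup E] {ε : ℝ≥0} {s N : Set E}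
    (hN : IsCover ε s N) {x : E} (hx : x ∈ s) : ∃ y ∈ N, ‖x - y‖ ≤ ε := by
  simpa [dist_eq_norm] using hN.subset_iUnion_closedBall hx

theorem norm_le_div_of_isCover [SeminormedAddCommGroup E] [InnerProductSpace ℝ E] {ε : ℝ≥0}
    (hε : ε < 1) {N : Set E} (hN : IsCover ε (closedBall 0 1) N) {z : E} {K : ℝ}
    (hK : ∀ x ∈ N, inner ℝ x z ≤ K) : ‖z‖ ≤ K / (1 - ε) := by
  have hunit : ‖z‖⁻¹ • z ∈ closedBall (0 : E) 1 := by
    simpa [norm_smul] using inv_mul_le_one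
  obtain ⟨x, hxN, hx⟩ := exists_mem_norm_sub_le_of_isCover hN hunit
  have hz : inner ℝ (‖z‖⁻¹ • z) z = ‖z‖ := by
    rw [real_inner_smul_left, real_inner_self_eq_norm_sq, sq, ← mul_assoc, inv_mul_mul_self]
  rw [le_div_iff₀ (sub_pos.2 (mod_cast hε))]
  have hdiff : inner ℝ (‖z‖⁻¹ • z - x) z ≤ ε * ‖z‖ :=
    (real_inner_le_norm _ _).trans (by gcongr)
  rw [inner_sub_left, hz] at hdiff
  linarith [hK x hxN]

theorem opNorm_le_div_of_isCover [SeminormedAddCommGroup E] [NormedSpace ℝ E]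
    [SeminormedAddCommGroup F] [NormedSpace ℝ F] {ε : ℝ≥0} (hε : ε < 1) {N : Set E}
    (hN : IsCover ε (closedBall 0 1) N) (T : E →L[ℝ] F) {K : ℝ} (hK : ∀ x ∈ N, ‖T x‖ ≤ K) :
    ‖T‖ ≤ K / (1 - ε) := by
  have hK0 : 0 ≤ K := by
    obtain ⟨x, hx, _⟩ := exists_mem_norm_sub_le_of_isCover hN (mem_closedBall_self zero_le_one)
    exact (norm_nonneg _).trans (hK x hx)
  have hself : ‖T‖ ≤ K + ε * ‖T‖ := by
    refine T.opNorm_le_of_unit_norm (by positivity) fun x hx => ?_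
    obtain ⟨y, hyN, hy⟩ := exists_mem_norm_sub_le_of_isCover hN
      (mem_closedBall_zero_iff.2 hx.le)
    calc ‖T x‖ = ‖T y + T (x - y)‖ := by simp
      _ ≤ ‖T y‖ + ‖T (x - y)‖ := norm_add_le _ _
      _ ≤ K + ε * ‖T‖ := add_le_add (hK y hyN) (T.le_of_opNorm_le_of_le le_rfl hy |>.trans_eq
          (mul_comm _ _))
  rw [le_div_iff₀ (sub_pos.2 (mod_cast hε))]
  linarith

theorem opNorm_le_four_mul_of_isCover_half [SeminormedAddCommGroup E] [NormedSpace ℝ E]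
    [SeminormedAddCommGroup F] [InnerProductSpace ℝ F] {M : Set F} {N : Set E}
    (hM : IsCover (1 / 2) (closedBall 0 1) M) (hN : IsCover (1 / 2) (closedBall 0 1) N)
    (T : E →L[ℝ] F) {K : ℝ} (hK : ∀ x ∈ M, ∀ y ∈ N, inner ℝ x (T y) ≤ K) : ‖T‖ ≤ 4 * K := by
  have hhalf : (1 / 2 : ℝ≥0) < 1 := by norm_num
  have hle := opNorm_le_div_of_isCover hhalf hN T fun y hy =>
    norm_le_div_of_isCover hhalf hM fun x hx => hK x hx y hy
  norm_num at hle
  linarith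

end Nets

section SubGaussianMaximum

open scoped NNReal

variable {Ω ι : Type*} {mΩ : MeasurableSpace Ω} {μ : Measure Ω} {X : ι → Ω → ℝ} {s : Finset ι}

theorem integrable_sup' (hs : s.Nonempty) (hX : ∀ i ∈ s, Integrable (X i) μ) :
    Integrable (s.sup' hs X) μ :=
  Finset.sup'_induction hs X (p := fun f => Integrable f μ) (fun _ hf _ hg => hf.sup hg) hX

theorem exp_mul_sup'_le_sum (t : ℝ) (hs : s.Nonempty) (x : ι → ℝ) :
    Real.exp (t * s.sup' hs x) ≤ ∑ i ∈ s, Real.exp (t * x i) := by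
  obtain ⟨i, hi, hmax⟩ := s.exists_mem_eq_sup' hs x
  rw [hmax]
  exact Finset.single_le_sum (f := fun i => Real.exp (t * x i)) (fun _ _ => (Real.exp_pos _).le) hi

theorem mul_integral_sup'_le [IsProbabilityMeasure μ] {c : ℝ≥0} (hs : s.Nonempty)
    (hX : ∀ i ∈ s, HasSubgaussianMGF (X i) c μ) (t : ℝ) :
    t * ∫ ω, s.sup' hs X ω ∂μ ≤ Real.log s.card + c * t ^ 2 / 2 := by
  have hsum : Integrable (fun ω => ∑ i ∈ s, Real.exp (t * X i ω)) μ :=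
    integrable_finsetSum _ fun i hi => (hX i hi).integrable_exp_mul t
  have hsup := integrable_sup' hs fun i hi => (hX i hi).integrable
  have hexp_le : ∀ ω, Real.exp (t * s.sup' hs X ω) ≤ ∑ i ∈ s, Real.exp (t * X i ω) := fun ω => by
    simpa only [Finset.sup'_apply] using exp_mul_sup'_le_sum t hs fun i => X i ω
  have hexp : Integrable (fun ω => Real.exp (t * s.sup' hs X ω)) μ :=
    hsum.mono' (Real.continuous_exp.comp_aestronglyMeasurable (hsup.const_mul t).1)
      (Eventually.of_forall fun ω => by simpa only [Real.norm_eq_abs, Real.abs_exp] using hexp_le ω)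
  have hcard : (0 : ℝ) < s.card := mod_cast hs.card_pos
  rw [← Real.exp_le_exp, Real.exp_add, Real.exp_log hcard, ← integral_const_mul]
  calc Real.exp (∫ ω, t * s.sup' hs X ω ∂μ)
      ≤ ∫ ω, Real.exp (t * s.sup' hs X ω) ∂μ :=
        convexOn_exp.map_integral_le Real.continuous_exp.continuousOn isClosed_univ
          (Eventually.of_forall fun _ => Set.mem_univ _) (hsup.const_mul t) hexp
    _ ≤ ∫ ω, ∑ i ∈ s, Real.exp (t * X i ω) ∂μ := integral_mono hexp hsum hexp_le
    _ = ∑ i ∈ s, mgf (X i) μ t := integral_finsetSum _ fun i hi => (hX i hi).integrable_exp_mul t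
    _ ≤ ∑ _i ∈ s, Real.exp (c * t ^ 2 / 2) := Finset.sum_le_sum fun i hi => (hX i hi).mgf_le t
    _ = s.card * Real.exp (c * t ^ 2 / 2) := by rw [Finset.sum_const, nsmul_eq_mul]

theorem integral_sup'_le_sqrt_log_card [IsProbabilityMeasure μ] {c : ℝ≥0} (hs : s.Nonempty)
    (hX : ∀ i ∈ s, HasSubgaussianMGF (X i) c μ) :
    ∫ ω, s.sup' hs X ω ∂μ ≤ √(2 * c * Real.log s.card) := by
  -- The bound holds for every real `t`, so a discriminant replaces the optimization over `t`.
  have hdiscrim : discrim (c / 2 : ℝ) (-∫ ω, s.sup' hs X ω ∂μ) (Real.log s.card) ≤ 0 :=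
    discrim_le_zero fun t => by linarith [mul_integral_sup'_le hs hX t]
  rw [discrim] at hdiscrim
  exact Real.le_sqrt_of_sq_le (by linarith)

theorem hasSubgaussianMGF_sum_mul_pi_gaussianReal [Fintype ι] (a : ι → ℝ) {c : ℝ≥0}
    (hc : ∑ i, a i ^ 2 ≤ c) :
    HasSubgaussianMGF (fun ω : ι → ℝ => ∑ i, a i * ω i) c
      (Measure.pi fun _ => gaussianReal 0 1) := by
  have hexp : ∀ t (ω : ι → ℝ), Real.exp (t * ∑ i, a i * ω i) = ∏ i, Real.exp (t * a i * ω i) :=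
    fun t ω => by simp only [Finset.mul_sum, ← mul_assoc, Real.exp_sum]
  refine ⟨fun t => ?_, fun t => ?_⟩
  · simp only [hexp]
    exact Integrable.fintype_prod (f := fun i x => Real.exp (t * a i * x))
      fun i => integrable_exp_mul_gaussianReal (t * a i)
  · have hfactor : ∀ i, ∫ x, Real.exp (t * a i * x) ∂gaussianReal 0 1
        = Real.exp ((t * a i) ^ 2 / 2) := fun i => by
      simpa [mgf] using mgf_gaussianReal (X := id) Measure.map_id (t * a i) (μ := 0) (v := 1)
    simp only [mgf, hexp]
    rw [integral_fintype_prod_eq_prod (fun i x => Real.exp (t * a i * x))]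
    simp only [hfactor, ← Real.exp_sum, ← Finset.sum_div, mul_pow, ← Finset.mul_sum]
    rw [mul_comm]
    gcongr

end SubGaussianMaximum

section OperatorNorm

open Metric Module
open scoped NNReal

variable {E F Ω : Type*} [NormedAddCommGroup E] [InnerProductSpace ℝ E] [FiniteDimensional ℝ E]
  [NormedAddCommGroup F] [InnerProductSpace ℝ F] [FiniteDimensional ℝ F]
  {mΩ : MeasurableSpace Ω} {μ : Measure Ω} [IsProbabilityMeasure μ] {T : Ω → E →L[ℝ] F} {c : ℝ≥0}

theorem exists_integrable_opNorm_le_of_hasSubgaussianMGF_inner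
    (hT : ∀ x y, ‖x‖ ≤ 1 → ‖y‖ ≤ 1 → HasSubgaussianMGF (fun ω => inner ℝ x (T ω y)) c μ) :
    ∃ g : Ω → ℝ, Integrable g μ ∧ (∀ ω, ‖T ω‖ ≤ g ω) ∧
      ∫ ω, g ω ∂μ ≤ 4 * √(2 * c * ((finrank ℝ F + finrank ℝ E) * Real.log 5)) := by
  obtain ⟨M, hM, hMcover, hMcard⟩ := exists_finset_isCover_half_unitBall (E := F)
  obtain ⟨N, hN, hNcover, hNcard⟩ := exists_finset_isCover_half_unitBall (E := E)
  have hne : (M ×ˢ N).Nonempty :=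
    (Finset.coe_nonempty.1 (hMcover.nonempty ⟨0, mem_closedBall_self zero_le_one⟩)).product
      (Finset.coe_nonempty.1 (hNcover.nonempty ⟨0, mem_closedBall_self zero_le_one⟩))
  let form : F × E → Ω → ℝ := fun p ω => inner ℝ p.1 (T ω p.2)
  have hform : ∀ p ∈ M ×ˢ N, HasSubgaussianMGF (form p) c μ := fun p hp =>
    hT p.1 p.2 (mem_closedBall_zero_iff.1 (hM (Finset.mem_product.1 hp).1))
      (mem_closedBall_zero_iff.1 (hN (Finset.mem_product.1 hp).2))
  have hcard : Real.log (M ×ˢ N).card ≤ (finrank ℝ F + finrank ℝ E) * Real.log 5 := by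
    rw [← Nat.cast_add, ← Real.log_pow, pow_add, Finset.card_product]
    have : 0 < M.card * N.card := by simpa [Finset.card_product] using hne.card_pos
    exact Real.log_le_log (mod_cast this) (mod_cast Nat.mul_le_mul hMcard hNcard)
  refine ⟨fun ω => 4 * (M ×ˢ N).sup' hne form ω,
    (integrable_sup' hne fun p hp => (hform p hp).integrable).const_mul 4, fun ω => ?_, ?_⟩
  · refine opNorm_le_four_mul_of_isCover_half hMcover hNcover _ fun x hx y hy => ?_
    exact Finset.le_sup' form (Finset.mk_mem_product hx hy) ω
  · rw [integral_const_mul]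
    gcongr
    exact (integral_sup'_le_sqrt_log_card hne hform).trans (by gcongr)

end OperatorNorm

section TopEigenvalue

open scoped Matrix.Norms.L2Operator MatrixOrder

variable {n : ℕ} [NeZero n] {A B : Matrix (Fin n) (Fin n) ℝ}

theorem lambdaMax_le_iff_le_algebraMap (hA : A.IsHermitian) {c : ℝ} :
    lambdaMax A ≤ c ↔ A ≤ algebraMap ℝ (Matrix (Fin n) (Fin n) ℝ) c := by
  rw [le_algebraMap_iff_spectrum_le hA.isSelfAdjoint, hA.spectrum_real_eq_range_eigenvalues,
    Set.forall_mem_range, lambdaMax, eigsOf, dif_pos hA,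
    ciSup_le_iff (Set.finite_range _).bddAbove]

theorem le_algebraMap_norm (hA : A.IsHermitian) :
    A ≤ algebraMap ℝ (Matrix (Fin n) (Fin n) ℝ) ‖A‖ :=
  (le_algebraMap_iff_spectrum_le hA.isSelfAdjoint).2 fun _ hx =>
    (le_abs_self _).trans (spectrum.norm_le_norm_of_mem hx)

theorem lambdaMax_le_lambdaMax_add_norm_sub (hA : A.IsHermitian) (hB : B.IsHermitian) :
    lambdaMax A ≤ lambdaMax B + ‖A - B‖ := by
  rw [lambdaMax_le_iff_le_algebraMap hA, map_add]
  simpa using add_le_add ((lambdaMax_le_iff_le_algebraMap hB).1 le_rfl)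
    (le_algebraMap_norm (hA.sub hB))

theorem lipschitzOnWith_lambdaMax :
    LipschitzOnWith 1 lambdaMax {A : Matrix (Fin n) (Fin n) ℝ | A.IsHermitian} :=
  LipschitzOnWith.of_le_add fun A hA B hB => by
    simpa [dist_eq_norm] using lambdaMax_le_lambdaMax_add_norm_sub hA hB

theorem abs_lambdaMax_sub_le_norm (hA : A.IsHermitian) (hB : B.IsHermitian) :
    |lambdaMax A - lambdaMax B| ≤ ‖A - B‖ := by
  simpa [Real.dist_eq, dist_eq_norm] using lipschitzOnWith_lambdaMax.dist_le_mul A hA B hB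

variable {Ω : Type*} {mΩ : MeasurableSpace Ω} {μ : Measure Ω} [IsFiniteMeasure μ]
  {M M' : Ω → Matrix (Fin n) (Fin n) ℝ}

theorem integrable_lambdaMax (hherm : ∀ ω, (M ω).IsHermitian) (hM : Integrable M μ) :
    Integrable (fun ω => lambdaMax (M ω)) μ := by
  obtain ⟨g, hg, heq⟩ := (lipschitzOnWith_lambdaMax (n := n)).extend_real
  simp only [heq (hherm _)]
  refine (hM.norm.add (integrable_const |g 0|)).mono'
    (hg.continuous.comp_aestronglyMeasurable hM.1) (Eventually.of_forall fun ω => ?_)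
  have hdist : |g (M ω) - g 0| ≤ ‖M ω‖ := by
    simpa [Real.dist_eq, dist_eq_norm] using hg.dist_le_mul (M ω) 0
  rw [Real.norm_eq_abs, Pi.add_apply]
  linarith [abs_sub_abs_le_abs_sub (g (M ω)) (g 0)]

theorem abs_integral_lambdaMax_sub_le (hM : ∀ ω, (M ω).IsHermitian)
    (hM' : ∀ ω, (M' ω).IsHermitian) (hMint : Integrable M μ) (hMint' : Integrable M' μ) :
    |∫ ω, lambdaMax (M ω) ∂μ - ∫ ω, lambdaMax (M' ω) ∂μ| ≤ ∫ ω, ‖M ω - M' ω‖ ∂μ := by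
  rw [← integral_sub (integrable_lambdaMax hM hMint) (integrable_lambdaMax hM' hMint')]
  exact norm_integral_le_of_norm_le (f := fun ω => lambdaMax (M ω) - lambdaMax (M' ω))
    (hMint.sub hMint').norm
    (Eventually.of_forall fun ω => abs_lambdaMax_sub_le_norm (hM ω) (hM' ω))

end TopEigenvalue

section Gote

open scoped NNReal

variable {n r : ℕ}

theorem tupleSym_comp_perm (a : Fin r → Fin n) (σ : Equiv.Perm (Fin r)) :
    tupleSym (a ∘ σ) = tupleSym a :=
  Subtype.ext (Multiset.coe_eq_coe.2 (σ.ofFn_comp_perm a))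

theorem gote_comp_perm (ω : GoteSpace r n) (a : Fin r → Fin n) (σ : Equiv.Perm (Fin r)) :
    gote ω (a ∘ σ) = gote ω a := by
  simp only [gote, permCount, tupleSym_comp_perm]

open Classical in
/-- The coefficient of the Gaussian coordinate `ω m` in the pairing `∑ a, gote ω a * T a` of a
GOTE tensor with a (not necessarily symmetric) tensor `T`. -/
noncomputable def goteCoeff (T : (Fin r → Fin n) → ℝ) (m : Sym (Fin n) r) : ℝ :=
  ∑ a with tupleSym a = m, √(r / permCount a) * T a

theorem sum_goteCoeff_mul (T : (Fin r → Fin n) → ℝ) (ω : GoteSpace r n) :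
    ∑ m, goteCoeff T m * ω m = ∑ a, gote ω a * T a := by
  classical
  rw [← Finset.sum_fiberwise Finset.univ tupleSym]
  refine Finset.sum_congr rfl fun m _ => ?_
  rw [goteCoeff, Finset.sum_mul]
  refine Finset.sum_congr (by congr) fun a ha => ?_
  rw [gote, (Finset.mem_filter.1 ha).2]
  ring

theorem goteCoeff_sq_le (T : (Fin r → Fin n) → ℝ) (m : Sym (Fin n) r) :
    goteCoeff T m ^ 2 ≤ r * ∑ a with tupleSym a = m, T a ^ 2 := by
  classical
  rw [goteCoeff]
  refine sq_sum_le_card_mul_sum_sq.trans ?_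
  rw [Finset.mul_sum, Finset.mul_sum]
  refine Finset.sum_le_sum fun a ha => ?_
  have hcard : ({b | tupleSym b = m} : Finset (Fin r → Fin n)).card = permCount a := by
    rw [permCount, (Finset.mem_filter.1 ha).2]
  have hpos : (0 : ℝ) < permCount a := mod_cast hcard ▸ Finset.card_pos.2 ⟨a, ha⟩
  have hsq : √(r / permCount a) ^ 2 = r / permCount a := Real.sq_sqrt (by positivity)
  rw [hcard, mul_pow, hsq, ← mul_assoc, mul_div_cancel₀ _ hpos.ne']

theorem sum_goteCoeff_sq_le (T : (Fin r → Fin n) → ℝ) :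
    ∑ m, goteCoeff T m ^ 2 ≤ r * ∑ a, T a ^ 2 := by
  rw [← Finset.sum_fiberwise Finset.univ tupleSym, Finset.mul_sum]
  exact Finset.sum_le_sum fun m _ => goteCoeff_sq_le T m

theorem hasSubgaussianMGF_sum_gote_mul (T : (Fin r → Fin n) → ℝ) {c : ℝ≥0}
    (hc : r * ∑ a, T a ^ 2 ≤ c) :
    HasSubgaussianMGF (fun ω => ∑ a, gote ω a * T a) c (goteMeasure r n) := by
  simp only [← sum_goteCoeff_mul]
  exact hasSubgaussianMGF_sum_mul_pi_gaussianReal _ ((sum_goteCoeff_sq_le T).trans hc)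

/-- The rank-one tensor `x₁ ⊗ ⋯ ⊗ x_r`, as a function of the index tuple. -/
def rankOneTensor (x : Fin r → Fin n → ℝ) (a : Fin r → Fin n) : ℝ :=
  ∏ k, x k (a k)

theorem sum_rankOneTensor_sq (x : Fin r → Fin n → ℝ) :
    ∑ a, rankOneTensor x a ^ 2 = ∏ k, ∑ i, x k i ^ 2 := by
  simp only [rankOneTensor, ← Finset.prod_pow, Finset.prod_univ_sum, Fintype.piFinset_univ]

theorem sum_fin_succ_arrow {α M : Type*} [Fintype α] [AddCommMonoid M] {k : ℕ}
    (f : (Fin (k + 1) → α) → M) : ∑ a, f a = ∑ i, ∑ a : Fin k → α, f (Matrix.vecCons i a) := by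
  rw [← Fintype.sum_prod_type', ← (Fin.consEquiv fun _ => α).sum_comp]
  rfl

end Gote

section MixedContraction

open scoped NNReal Matrix.Norms.L2Operator

variable {n : ℕ} (ω : GoteSpace 4 n) (u v w : Fin n → ℝ)

theorem mixedContraction_isHermitian : (mixedContraction ω u v).IsHermitian := by
  ext i j
  have hswap : ∀ a b, ![j, i, a, b] = ![i, j, a, b] ∘ Equiv.swap 0 1 := fun a b => by
    ext k; fin_cases k <;> rfl
  simp only [Matrix.conjTranspose_apply, star_trivial, mixedContraction, hswap, gote_comp_perm]

theorem mixedContraction_sub_right :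
    mixedContraction ω u (v - w) = mixedContraction ω u v - mixedContraction ω u w := by
  ext i j
  simp only [mixedContraction, Matrix.sub_apply, Pi.sub_apply, mul_sub, Finset.sum_sub_distrib]

theorem continuous_mixedContraction : Continuous fun ω => mixedContraction ω u v := by
  unfold mixedContraction gote
  fun_prop

theorem inner_toEuclideanCLM_mixedContraction (x y : EuclideanSpace ℝ (Fin n)) :
    inner ℝ x (Matrix.toEuclideanCLM (𝕜 := ℝ) (mixedContraction ω u w) y)
      = ∑ a, gote ω a * rankOneTensor ![x, y, u, w] a := by
  simp only [Matrix.inner_toEuclideanCLM, dotProduct, Matrix.mulVec, mixedContraction,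
    sum_fin_succ_arrow, Fintype.sum_unique, rankOneTensor, Fin.prod_univ_four, Finset.mul_sum,
    Finset.sum_mul]
  refine Finset.sum_congr rfl fun i _ => Finset.sum_congr rfl fun j _ =>
    Finset.sum_congr rfl fun a _ => Finset.sum_congr rfl fun b _ => ?_
  rw [Subsingleton.elim (default : Fin 0 → Fin n) ![]]
  change x i * (gote ω ![i, j, a, b] * u a * w b * y j)
    = gote ω ![i, j, a, b] * (x i * y j * u a * w b)
  ring

theorem hasSubgaussianMGF_inner_mixedContraction {c : ℝ≥0}
    (hc : 4 * ((∑ i, u i ^ 2) * ∑ i, w i ^ 2) ≤ c) {x y : EuclideanSpace ℝ (Fin n)}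
    (hx : ‖x‖ ≤ 1) (hy : ‖y‖ ≤ 1) :
    HasSubgaussianMGF
      (fun ω => inner ℝ x (Matrix.toEuclideanCLM (𝕜 := ℝ) (mixedContraction ω u w) y)) c
      (goteMeasure 4 n) := by
  have hxy : (∑ i, x i ^ 2) * ∑ i, y i ^ 2 ≤ 1 := by
    rw [← EuclideanSpace.real_norm_sq_eq, ← EuclideanSpace.real_norm_sq_eq]
    exact mul_le_one₀ (pow_le_one₀ (norm_nonneg x) hx) (sq_nonneg _)
      (pow_le_one₀ (norm_nonneg y) hy)
  have hnorm : ∑ a, rankOneTensor ![x, y, u, w] a ^ 2 ≤ (∑ i, u i ^ 2) * ∑ i, w i ^ 2 := by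
    rw [sum_rankOneTensor_sq, Fin.prod_univ_four]
    exact (mul_assoc _ _ _).trans_le (mul_le_of_le_one_left (by positivity) hxy)
  simp only [inner_toEuclideanCLM_mixedContraction]
  refine hasSubgaussianMGF_sum_gote_mul _ (le_trans ?_ hc)
  rw [Nat.cast_ofNat]
  gcongr

theorem exists_integrable_norm_mixedContraction_le :
    ∃ g : GoteSpace 4 n → ℝ, Integrable g (goteMeasure 4 n) ∧
      (∀ ω, ‖mixedContraction ω u w‖ ≤ g ω) ∧
      ∫ ω, g ω ∂goteMeasure 4 n ≤ 32 * √n * (√(∑ i, u i ^ 2) * √(∑ i, w i ^ 2)) := by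
  obtain ⟨g, hg, hle, hint⟩ := exists_integrable_opNorm_le_of_hasSubgaussianMGF_inner
    (c := (4 * ((∑ i, u i ^ 2) * ∑ i, w i ^ 2)).toNNReal) fun x y hx hy =>
      hasSubgaussianMGF_inner_mixedContraction u w (Real.le_coe_toNNReal _) hx hy
  refine ⟨g, hg, hle, hint.trans ?_⟩
  have hlog : Real.log 5 ≤ 4 := by linarith [Real.log_le_sub_one_of_pos (x := 5) (by norm_num)]
  rw [Real.coe_toNNReal _ (by positivity), finrank_euclideanSpace_fin]
  calc 4 * √(2 * (4 * ((∑ i, u i ^ 2) * ∑ i, w i ^ 2)) * ((n + n) * Real.log 5))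
      ≤ 4 * √(2 * (4 * ((∑ i, u i ^ 2) * ∑ i, w i ^ 2)) * ((n + n) * 4)) := by gcongr
    _ = 4 * √(8 ^ 2 * (n * ((∑ i, u i ^ 2) * ∑ i, w i ^ 2))) := by ring_nf
    _ = 32 * √n * (√(∑ i, u i ^ 2) * √(∑ i, w i ^ 2)) := by
      rw [Real.sqrt_mul (by positivity), Real.sqrt_sq (by norm_num),
        Real.sqrt_mul (Nat.cast_nonneg n), Real.sqrt_mul (by positivity)]
      ring

theorem integrable_mixedContraction :
    Integrable (fun ω => mixedContraction ω u w) (goteMeasure 4 n) := by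
  obtain ⟨g, hg, hle, -⟩ := exists_integrable_norm_mixedContraction_le u w
  exact hg.mono' (continuous_mixedContraction u w).aestronglyMeasurable (Eventually.of_forall hle)

theorem integral_norm_mixedContraction_le :
    ∫ ω, ‖mixedContraction ω u w‖ ∂goteMeasure 4 n
      ≤ 32 * √n * (√(∑ i, u i ^ 2) * √(∑ i, w i ^ 2)) := by
  obtain ⟨g, hg, hle, hint⟩ := exists_integrable_norm_mixedContraction_le u w
  exact (integral_mono (integrable_mixedContraction u w).norm hg hle).trans hint

end MixedContraction

section Comparison

open scoped Matrix.Norms.L2Operator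

theorem sqrt_sum_sub_sq_le {ι : Type*} [Fintype ι] (u v : ι → ℝ) :
    √(∑ i, (u i - v i) ^ 2) ≤ √(∑ i, u i ^ 2) + √(∑ i, v i ^ 2) := by
  simpa [EuclideanSpace.norm_eq] using norm_sub_le (WithLp.toLp 2 u) (WithLp.toLp 2 v)

theorem le_mul_add_sqrt_mul_sqrt_log {d D ε : ℝ} (hd : 0 ≤ d) (hdD : d ≤ D) (hε : 0 < ε)
    (hε1 : ε ≤ 1) : d ≤ D * ε + √D * √(d * Real.log (1 / ε)) := by
  -- Split `d = d * ε + d * (1 - ε)`, using `(1 - ε)² ≤ 1 - ε ≤ log (1 / ε)` in the second term.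
  have hlog : 1 - ε ≤ Real.log (1 / ε) := by
    rw [one_div, Real.log_inv]
    linarith [Real.log_le_sub_one_of_pos hε]
  have hsqrt : d * (1 - ε) ≤ √D * √(d * Real.log (1 / ε)) := by
    rw [← Real.sqrt_mul (hd.trans hdD)]
    refine Real.le_sqrt_of_sq_le ?_
    calc (d * (1 - ε)) ^ 2 = d * d * ((1 - ε) * (1 - ε)) := by ring
      _ ≤ D * d * (1 * Real.log (1 / ε)) := by
        have hD : 0 ≤ D * d := mul_nonneg (hd.trans hdD) hd
        gcongr
        linarith
      _ = D * (d * Real.log (1 / ε)) := by ring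
  linarith [mul_le_mul_of_nonneg_right hdD hε.le]

theorem sqrt_sum_sub_sq_le_of_sum_sq_eq_one {ι : Type*} [Fintype ι] {u v : ι → ℝ}
    (hu : ∑ i, u i ^ 2 = 1) (hv : ∑ i, v i ^ 2 = 1) {ε : ℝ} (hε : 0 < ε) (hε1 : ε ≤ 1) :
    √(∑ i, (u i - v i) ^ 2)
      ≤ 2 * ε + √2 * √(√(∑ i, (u i - v i) ^ 2) * Real.log (1 / ε)) := by
  refine le_mul_add_sqrt_mul_sqrt_log (Real.sqrt_nonneg _) ?_ hε hε1
  have htriangle := sqrt_sum_sub_sq_le u v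
  rw [hu, hv, Real.sqrt_one] at htriangle
  linarith

theorem expected_top_eigenvalue_comparison_general {n : ℕ} (hn : 1 ≤ n) (u v w : Fin n → ℝ) :
    |(∫ ω, lambdaMax ((Real.sqrt n)⁻¹ • mixedContraction ω u v) ∂(goteMeasure 4 n))
      - ∫ ω, lambdaMax ((Real.sqrt n)⁻¹ • mixedContraction ω u w) ∂(goteMeasure 4 n)|
      ≤ 32 * (√(∑ i, u i ^ 2) * √(∑ i, (v i - w i) ^ 2)) := by
  have : NeZero n := ⟨by omega⟩
  have hn0 : √(n : ℝ) ≠ 0 := by positivity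
  have hherm (x : Fin n → ℝ) (ω) : ((√n)⁻¹ • mixedContraction ω u x).IsHermitian :=
    (mixedContraction_isHermitian ω u x).smul (IsSelfAdjoint.all _)
  have hint (x : Fin n → ℝ) := (integrable_mixedContraction u x).smul (√n)⁻¹
  calc _ ≤ ∫ ω, ‖(√n)⁻¹ • mixedContraction ω u v - (√n)⁻¹ • mixedContraction ω u w‖
          ∂goteMeasure 4 n :=
        abs_integral_lambdaMax_sub_le (hherm v) (hherm w) (hint v) (hint w)
    _ = (√n)⁻¹ * ∫ ω, ‖mixedContraction ω u (v - w)‖ ∂goteMeasure 4 n := by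
        simp only [← smul_sub, ← mixedContraction_sub_right, norm_smul, integral_const_mul,
          norm_inv, Real.norm_of_nonneg (Real.sqrt_nonneg _)]
    _ ≤ (√n)⁻¹ * (32 * √n * (√(∑ i, u i ^ 2) * √(∑ i, (v i - w i) ^ 2))) := by
        gcongr
        exact integral_norm_mixedContraction_le u (v - w)
    _ = 32 * (√(∑ i, u i ^ 2) * √(∑ i, (v i - w i) ^ 2)) := by field_simp

end Comparison

/-- **Comparison of expected largest eigenvalues of mixed and pure contractions.**
There exist universal constants `C₁, C₂ > 0` such that for all `n ≥ 1`, unit vectors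
`u, v` and `ε ∈ (0,1)`,
`|E λ₁(n^{−1/2}G·u⊗v) − E λ₁(n^{−1/2}G·u⊗u)| ≤ C₁ε + C₂√(‖u−v‖₂·log(1/ε))`. -/
theorem expected_top_eigenvalue_comparison :
    ∃ C₁ : ℝ, 0 < C₁ ∧ ∃ C₂ : ℝ, 0 < C₂ ∧
      ∀ n : ℕ, 1 ≤ n → ∀ u v : Fin n → ℝ,
        (∑ i, u i ^ 2 = 1) → (∑ i, v i ^ 2 = 1) →
        ∀ ε : ℝ, 0 < ε → ε < 1 →
        |(∫ ω, lambdaMax ((Real.sqrt n)⁻¹ • mixedContraction ω u v) ∂(goteMeasure 4 n))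
          - ∫ ω, lambdaMax ((Real.sqrt n)⁻¹ • mixedContraction ω u u) ∂(goteMeasure 4 n)|
          ≤ C₁ * ε + C₂ * Real.sqrt (Real.sqrt (∑ i, (u i - v i) ^ 2) * Real.log (1 / ε)) := by
  refine ⟨64, by norm_num, 32 * √2, by positivity, fun n hn u v hu hv ε hε hε1 => ?_⟩
  have hlip := expected_top_eigenvalue_comparison_general hn u u v
  rw [abs_sub_comm, hu, Real.sqrt_one, one_mul] at hlip
  linarith [sqrt_sum_sub_sq_le_of_sum_sq_eq_one hu hv hε hε1.le]
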